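/- arXiv:2203.14901 — 3 statements merged into one kernel-verified Lean document; each statement's English description precedes it below -/
import Mathlib

section
/- Let K be a field and let F = (f₁, …, f_s) be polynomials in K[x₁, …, x_k] such that the ideal J = ⟨f₁, …, f_s⟩ is zero-dimensional, i.e., the quotient K[x₁, …, x_k]/J is a finite-dimensional K-vector space. Let B be a finite set of monomials whose residue classes form a K-vector-space basis of K[x₁, …, x_k]/J, and let a be a monomial. Then there exist finite sets of monomials A₁, …, A_s such that for every b ∈ B with a·b ∉ B, the K-linear span of the set of shifts {m·f_j : m ∈ A_j, 1 ≤ j ≤ s} contains a polynomial of the form a·b − p, where every monomial occurring in p belongs to B. -/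
open MvPolynomial

/-- **Theorem 1 (the elimination template is well defined).**
Let `F = (f₁, …, f_s)` be polynomials in `K[x₁, …, x_k]` generating a zero-dimensional ideal
`J` (i.e. the quotient is a finite-dimensional `K`-vector space), let `B` be a finite set of
monomials whose residue classes form a basis of the quotient, and let `a` be a monomial.
Then there exist finite sets of monomials `A₁, …, A_s` such that for every `b ∈ B` with
`a·b ∉ B`, the `K`-linear span of the shifts `{m·f_j : m ∈ A_j}` contains a polynomial
`a·b − p` with all monomials of `p` in `B`. -/
theorem elimination_template_well_defined
    {K : Type*} [Field K] {k s : ℕ}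
    (F : Fin s → MvPolynomial (Fin k) K)
    (J : Ideal (MvPolynomial (Fin k) K))
    (hJ : J = Ideal.span (Set.range F))
    (hfin : FiniteDimensional K (MvPolynomial (Fin k) K ⧸ J))
    (B : Finset ((Fin k) →₀ ℕ))
    (hli : LinearIndependent K
      (fun b : B => Ideal.Quotient.mk J (monomial (b : (Fin k) →₀ ℕ) (1 : K))))
    (hspan : Submodule.span K
      (Set.range (fun b : B => Ideal.Quotient.mk J (monomial (b : (Fin k) →₀ ℕ) (1 : K)))) = ⊤)
    (a : (Fin k) →₀ ℕ) :
    ∃ A : Fin s → Finset ((Fin k) →₀ ℕ),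
      ∀ b ∈ B, a + b ∉ B →
        ∃ p : MvPolynomial (Fin k) K,
          (∀ m ∈ p.support, m ∈ B) ∧
          monomial (a + b) (1 : K) - p ∈
            Submodule.span K
              {q : MvPolynomial (Fin k) K |
                ∃ j : Fin s, ∃ m ∈ A j, q = monomial m (1 : K) * F j} := by
  classical
  have key : ∀ b : (Fin k) →₀ ℕ, ∃ p : MvPolynomial (Fin k) K,
      ∃ c : Fin s → MvPolynomial (Fin k) K,
      (∀ m ∈ p.support, m ∈ B) ∧ ∑ j, c j * F j = monomial (a + b) (1 : K) - p := by
    intro b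
    have h : Ideal.Quotient.mk J (monomial (a + b) (1 : K)) ∈ Submodule.span K
      (Set.range (fun b : B => Ideal.Quotient.mk J (monomial (b : (Fin k) →₀ ℕ) (1 : K)))) := by
      rw [hspan]; trivial
    obtain ⟨d, hd⟩ := (Submodule.mem_span_range_iff_exists_fun K).1 h
    have hmem : monomial (a + b) (1 : K) -
        ∑ i : B, d i • monomial (i : (Fin k) →₀ ℕ) (1 : K) ∈ J := by
      rw [← Ideal.Quotient.eq, ← hd, map_sum]
      rfl
    rw [hJ] at hmem
    obtain ⟨c, hc⟩ := (Submodule.mem_span_range_iff_exists_fun _).1 hmem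
    refine ⟨_, c, ?_, by simpa [smul_eq_mul] using hc⟩
    intro m hm
    by_contra hmB
    rw [mem_support_iff] at hm
    apply hm
    rw [coeff_sum]
    refine Finset.sum_eq_zero fun i _ => ?_
    have : (i : (Fin k) →₀ ℕ) ≠ m := fun e => hmB (e ▸ i.2)
    simp [coeff_smul, coeff_monomial, this]
  choose p c hp hc using key
  refine ⟨fun j => B.biUnion fun b => (c b j).support, fun b hb _ => ⟨p b, hp b, ?_⟩⟩
  rw [← hc b]
  refine Submodule.sum_mem _ fun j _ => ?_
  rw [(c b j).as_sum, Finset.sum_mul]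
  refine Submodule.sum_mem _ fun m hm => ?_
  have e : monomial m (coeff m (c b j)) * F j
      = coeff m (c b j) • (monomial m (1 : K) * F j) := by
    rw [← smul_mul_assoc, smul_monomial, smul_eq_mul, mul_one]
  rw [e]
  exact Submodule.smul_mem _ _ (Submodule.subset_span
    ⟨j, m, Finset.mem_biUnion.2 ⟨b, hb, hm⟩, rfl⟩)
end

section
/- Let K be a field, let A be an invertible n×n matrix over K, B an n×m matrix, C a p×n matrix, D a p×m matrix, and let M be the (n+p)×(n+m) block matrix [[A, B], [C, D]]. Then for every vector v ∈ Kᵐ, v lies in the row space of the Schur complement M/A = D − C·A⁻¹·B if and only if the vector in Kⁿ⁺ᵐ whose first n coordinates are 0 and whose last m coordinates are v lies in the row space of M. -/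
open Matrix in
theorem mem_rowSpan_aux {K ι κ : Type*} [Field K] [Fintype ι] (M : Matrix ι κ K) (v : κ → K) :
    v ∈ Submodule.span K (Set.range M) ↔ ∃ x : ι → K, x ᵥ* M = v := by
  have h := _root_.range_vecMulLinear M
  change _ = Submodule.span K (Set.range M) at h
  rw [← h]
  rfl

/-- **Row space and the Schur complement.** For a block matrix `M = [[A, B], [C, D]]` with `A`
invertible, a vector `v` lies in the row space of the Schur complement `M/A = D − C·A⁻¹·B`
iff the vector `(0, v)` (zero on the first `n` coordinates) lies in the row space of `M`. -/
theorem rowSpace_schurComplement_iff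
    {K : Type*} [Field K] {n m p : ℕ}
    (A : Matrix (Fin n) (Fin n) K) (B : Matrix (Fin n) (Fin m) K)
    (C : Matrix (Fin p) (Fin n) K) (D : Matrix (Fin p) (Fin m) K)
    (hA : IsUnit A) :
    ∀ v : Fin m → K,
      v ∈ Submodule.span K (Set.range (D - C * A⁻¹ * B)) ↔
      (Sum.elim (0 : Fin n → K) v) ∈
        Submodule.span K (Set.range (Matrix.fromBlocks A B C D)) := by
  intro v
  have hd : IsUnit A.det := (Matrix.isUnit_iff_isUnit_det A).1 hA
  rw [mem_rowSpan_aux, mem_rowSpan_aux]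
  constructor
  · rintro ⟨y, rfl⟩
    refine ⟨Sum.elim (-(Matrix.vecMul y (C * A⁻¹))) y, ?_⟩
    rw [Matrix.vecMul_fromBlocks]
    congr 1
    · simp only [Sum.elim_comp_inl, Sum.elim_comp_inr, Matrix.neg_vecMul, Matrix.vecMul_vecMul]
      rw [Matrix.nonsing_inv_mul_cancel_right _ _ hd, neg_add_cancel]
    · simp only [Sum.elim_comp_inl, Sum.elim_comp_inr, Matrix.neg_vecMul, Matrix.vecMul_vecMul,
        Matrix.vecMul_sub]
      abel
  · rintro ⟨x, hx⟩
    rw [Matrix.vecMul_fromBlocks] at hx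
    have h1 := congrArg (fun f => f ∘ Sum.inl) hx
    have h2 := congrArg (fun f => f ∘ Sum.inr) hx
    simp only [Sum.elim_comp_inl, Sum.elim_comp_inr] at h1 h2
    refine ⟨x ∘ Sum.inr, ?_⟩
    have h3 : Matrix.vecMul (x ∘ Sum.inr) C = -(Matrix.vecMul (x ∘ Sum.inl) A) :=
      eq_neg_of_add_eq_zero_right h1
    have h4 : Matrix.vecMul (x ∘ Sum.inr) (C * A⁻¹ * B) = -(Matrix.vecMul (x ∘ Sum.inl) B) := by
      rw [← Matrix.vecMul_vecMul, ← Matrix.vecMul_vecMul, h3, Matrix.neg_vecMul,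
        Matrix.vecMul_vecMul, Matrix.mul_nonsing_inv _ hd, Matrix.vecMul_one, Matrix.neg_vecMul]
    rw [Matrix.vecMul_sub, h4, ← h2]
    abel
end

section
/- Let K be a field and let M = [[A, B], [C, D]] be a block matrix over K in which A is square and invertible. Suppose the columns of the right block [B; D] are indexed by a disjoint union E' ⊔ R ⊔ B̄, and suppose that for every r ∈ R the row space of M contains a vector that vanishes on all columns of the left block [A; C], vanishes on all columns in E', vanishes on all columns in R except r, and equals 1 at the column r. Then the Schur complement M/A = D − C·A⁻¹·B has the same property: for every r ∈ R, the row space of M/A contains a vector that vanishes on all columns in E', vanishes on all columns in R except r, and equals 1 at the column r. -/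
/-- **Proposition 1 (Schur complement reduction of elimination templates).**
Let `M = [[A, B], [C, D]]` be a block matrix over a field with `A` square and invertible, and
let the columns of the right block be indexed by the disjoint union `E' ⊔ R ⊔ B̄`. If for every
`r ∈ R` the row space of `M` contains a vector vanishing on all columns of the left block, on
all columns in `E'` and on all columns in `R` except `r`, with value `1` at `r`, then the Schur
complement `M/A = D − C·A⁻¹·B` has the same property. -/
theorem schurComplement_is_template
    {K : Type*} [Field K] {ι ρ E' R Bbar : Type*} [Fintype ι] [DecidableEq ι]
    (A : Matrix ι ι K) (B : Matrix ι (E' ⊕ R ⊕ Bbar) K)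
    (C : Matrix ρ ι K) (D : Matrix ρ (E' ⊕ R ⊕ Bbar) K)
    (hA : IsUnit A)
    (hM : ∀ r : R,
      ∃ w ∈ Submodule.span K (Set.range (Matrix.fromBlocks A B C D)),
        (∀ i : ι, w (Sum.inl i) = 0) ∧
        (∀ e : E', w (Sum.inr (Sum.inl e)) = 0) ∧
        (∀ r' : R, r' ≠ r → w (Sum.inr (Sum.inr (Sum.inl r'))) = 0) ∧
        w (Sum.inr (Sum.inr (Sum.inl r))) = 1) :
    ∀ r : R,
      ∃ w ∈ Submodule.span K (Set.range (D - C * A⁻¹ * B)),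
        (∀ e : E', w (Sum.inl e) = 0) ∧
        (∀ r' : R, r' ≠ r → w (Sum.inr (Sum.inl r')) = 0) ∧
        w (Sum.inr (Sum.inl r)) = 1 := by
  have key : ∀ w ∈ Submodule.span K (Set.range (Matrix.fromBlocks A B C D)),
      ((fun j => w (Sum.inr j)) - Matrix.vecMul (fun i => w (Sum.inl i)) (A⁻¹ * B)) ∈
        Submodule.span K (Set.range (D - C * A⁻¹ * B)) := by
    intro w hw
    induction hw using Submodule.span_induction with
    | mem x hx =>
      obtain ⟨k, rfl⟩ := hx
      cases k with
      | inl i =>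
        have h0 : A * (A⁻¹ * B) = B :=
          Matrix.mul_nonsing_inv_cancel_left A B ((Matrix.isUnit_iff_isUnit_det A).1 hA)
        have h1 : Matrix.vecMul (A i) (A⁻¹ * B) = B i := by
          rw [← Matrix.mul_apply_eq_vecMul, h0]
        have h2 : (fun j => Matrix.fromBlocks A B C D (Sum.inl i) (Sum.inr j)) -
            Matrix.vecMul (fun i' => Matrix.fromBlocks A B C D (Sum.inl i) (Sum.inl i'))
              (A⁻¹ * B) = 0 := by
          change B i - Matrix.vecMul (A i) (A⁻¹ * B) = 0
          rw [h1, sub_self]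
        rw [h2]
        exact Submodule.zero_mem _
      | inr k =>
        apply Submodule.subset_span
        refine ⟨k, ?_⟩
        change D k - (C * A⁻¹ * B) k = D k - Matrix.vecMul (C k) (A⁻¹ * B)
        rw [Matrix.mul_assoc, Matrix.mul_apply_eq_vecMul]
    | zero =>
      convert Submodule.zero_mem _
      ext j
      simp [Matrix.vecMul, dotProduct]
    | add x y _ _ hx hy =>
      convert Submodule.add_mem _ hx hy using 1
      ext j
      simp [Matrix.vecMul, dotProduct, add_mul, Finset.sum_add_distrib]
      ring
    | smul a x _ hx =>
      convert Submodule.smul_mem _ a hx using 1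
      ext j
      simp [Matrix.vecMul, dotProduct, mul_sub, Finset.mul_sum, mul_assoc]
  intro r
  obtain ⟨w, hw, h0, h1, h2, h3⟩ := hM r
  refine ⟨fun j => w (Sum.inr j), ?_, h1, h2, h3⟩
  have h := key w hw
  have hz : (fun i => w (Sum.inl i)) = (0 : ι → K) := funext h0
  rwa [hz, Matrix.zero_vecMul, sub_zero] at h
end
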